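/- For every n ∈ ℕ and every β ≥ 0 there exists a constant C > 0 (depending only on n and β) such that for all μ > 0 and all ξ > 0, one has | dⁿ/dξⁿ √(K_μ(ξ)) | ≤ C·μ^{n/2}·(1+μξ²)^{(1−2n)/4}. (Equivalently, |dⁿ/dξⁿ √(K_μ(ξ))| ≲_β μ^{n/2}·⟨√μ ξ⟩^{1/2−n}.) -/

import Mathlib

/-- The symbol `T_μ(ξ) = tanh(√μ ξ)/(√μ ξ)` for `ξ > 0`. -/
noncomputable def Tpos (μ ξ : ℝ) : ℝ := Real.tanh (Real.sqrt μ * ξ) / (Real.sqrt μ * ξ)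

/-- The full-dispersion symbol `K_μ(ξ) = T_μ(ξ)·(1 + β μ ξ²)` for `ξ > 0`. -/
noncomputable def Kpos (β μ ξ : ℝ) : ℝ := Tpos μ ξ * (1 + β * μ * ξ ^ 2)

/-! Up to the dilation `y = √μ ξ`, the function `√K_μ` is `√(tanh y / y) · √(1 + β y²)`, so it is
enough that this extends to a symbol of order `1/2` on the whole line. Symbols form a filtered
algebra which is stable under division by `y`, as long as the quotient is smooth, and under real
powers of positive elliptic symbols. Since `tanh` is bounded and `tanh' = 1 - tanh²` decays
exponentially, `tanh` is a symbol of order `0`, so that `tanh y / y` is one of order `-1`; it is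
elliptic because `tanh y ≥ tanh (arsinh y) = y / ⟨y⟩` for `y ≥ 0`. -/

open Asymptotics Filter

section JapaneseBracket

/-- The Japanese bracket `⟨y⟩ = (1 + y²)^{1/2}`, against which the growth of symbols is measured. -/
noncomputable def japaneseBracket (y : ℝ) : ℝ := √(1 + y ^ 2)

lemma one_le_japaneseBracket (y : ℝ) : 1 ≤ japaneseBracket y :=
  Real.one_le_sqrt.2 (le_add_of_nonneg_right (sq_nonneg y))

lemma japaneseBracket_pos (y : ℝ) : 0 < japaneseBracket y :=
  one_pos.trans_le (one_le_japaneseBracket y)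

lemma japaneseBracket_sq (y : ℝ) : japaneseBracket y ^ 2 = 1 + y ^ 2 :=
  Real.sq_sqrt (by positivity)

lemma japaneseBracket_rpow (y p : ℝ) : japaneseBracket y ^ p = (1 + y ^ 2) ^ (p / 2) := by
  rw [japaneseBracket, Real.sqrt_eq_rpow, ← Real.rpow_mul (by positivity), one_div_mul_eq_div]

lemma japaneseBracket_rpow_pos (y p : ℝ) : 0 < japaneseBracket y ^ p :=
  Real.rpow_pos_of_pos (japaneseBracket_pos y) p

lemma abs_le_japaneseBracket (y : ℝ) : |y| ≤ japaneseBracket y :=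
  Real.abs_le_sqrt (le_add_of_nonneg_left zero_le_one)

lemma continuous_japaneseBracket_rpow (p : ℝ) : Continuous fun y => japaneseBracket y ^ p :=
  (show Continuous fun y : ℝ => √(1 + y ^ 2) by fun_prop).rpow_const
    fun y => Or.inl (japaneseBracket_pos y).ne'

lemma japaneseBracket_le_one_add_abs (y : ℝ) : japaneseBracket y ≤ 1 + |y| := by
  simpa [japaneseBracket] using sqrt_one_add_norm_sq_le y

lemma japaneseBracket_rpow_isBigO_of_le {p q : ℝ} (hpq : p ≤ q) :
    (fun y => japaneseBracket y ^ p) =O[⊤] fun y => japaneseBracket y ^ q :=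
  isBigO_of_le _ fun y => by
    rw [Real.norm_of_nonneg (japaneseBracket_rpow_pos y p).le,
      Real.norm_of_nonneg (japaneseBracket_rpow_pos y q).le]
    exact Real.rpow_le_rpow_of_exponent_le (one_le_japaneseBracket y) hpq

lemma inv_isBigO_japaneseBracket_rpow_neg_one :
    (fun y : ℝ => y⁻¹) =O[𝓟 (Set.Icc (-1) 1)ᶜ] fun y => japaneseBracket y ^ (-1 : ℝ) := by
  refine isBigO_principal.2 ⟨2, fun y hy => ?_⟩
  have hy_one : 1 < |y| := by
    rwa [Set.mem_compl_iff, Set.mem_Icc, ← abs_le, not_le] at hy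
  have hbracket : japaneseBracket y ≤ 2 * |y| := by
    linarith [japaneseBracket_le_one_add_abs y]
  rw [Real.rpow_neg_one, norm_inv, norm_inv, Real.norm_eq_abs,
    Real.norm_of_nonneg (japaneseBracket_pos y).le, ← div_eq_mul_inv,
    inv_le_comm₀ (by positivity) (div_pos two_pos (japaneseBracket_pos y)), inv_div]
  linarith

lemma isBigO_japaneseBracket_rpow_of_id_smul {E : Type*} [NormedAddCommGroup E] [NormedSpace ℝ E]
    {f : ℝ → E} {p : ℝ} (hf : Continuous f)
    (hyf : (fun y => y • f y) =O[⊤] fun y => japaneseBracket y ^ (p + 1)) :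
    f =O[⊤] fun y => japaneseBracket y ^ p := by
  have hnear : f =O[𝓟 (Set.Icc (-1) 1)] fun y => japaneseBracket y ^ p :=
    (hf.continuousOn.isBigO_principal isCompact_Icc (c := (1 : ℝ)) (by simp)).trans
      ((continuous_japaneseBracket_rpow p).continuousOn.isBigO_rev_principal isCompact_Icc
        (fun y _ => (japaneseBracket_rpow_pos y p).ne') 1)
  have hfar : f =O[𝓟 (Set.Icc (-1) 1)ᶜ] fun y => japaneseBracket y ^ p := by
    refine (inv_isBigO_japaneseBracket_rpow_neg_one.smul (hyf.mono le_top)).congr' ?_ ?_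
    · filter_upwards [mem_principal_self _] with y hy
      have hy_ne : y ≠ 0 := by
        rintro rfl
        exact hy (by simp)
      exact inv_smul_smul₀ hy_ne (f y)
    · refine Eventually.of_forall fun y => ?_
      simp only [smul_eq_mul]
      rw [← Real.rpow_add (japaneseBracket_pos y), neg_add_cancel_comm_assoc]
  simpa using hnear.sup hfar

end JapaneseBracket

section Symbol

variable {E : Type*} [NormedAddCommGroup E] [NormedSpace ℝ E] {N : ℕ} {m m' : ℝ}

/-- The symbol class `S^m` on the real line at finite regularity `N`: the functions of class `C^N`
whose derivatives satisfy `f⁽ⁿ⁾(y) = O(⟨y⟩^(m-n))` uniformly on `ℝ` for `n ≤ N`. Keeping `N` finite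
allows induction on it through `isSymbol_succ_iff`. -/
structure IsSymbol (N : ℕ) (m : ℝ) (f : ℝ → E) : Prop where
  contDiff : ContDiff ℝ N f
  iteratedDeriv_isBigO :
    ∀ n ≤ N, iteratedDeriv n f =O[⊤] fun y => japaneseBracket y ^ (m - n)

lemma isSymbol_zero_iff {f : ℝ → E} :
    IsSymbol 0 m f ↔ Continuous f ∧ f =O[⊤] fun y => japaneseBracket y ^ m := by
  refine ⟨fun h => ⟨contDiff_zero.1 h.contDiff, ?_⟩, fun h => ⟨contDiff_zero.2 h.1, ?_⟩⟩
  · simpa using h.iteratedDeriv_isBigO 0 le_rfl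
  · intro n hn
    obtain rfl := Nat.le_zero.1 hn
    simpa using h.2

lemma isSymbol_succ_iff {f : ℝ → E} :
    IsSymbol (N + 1) m f ↔
      Differentiable ℝ f ∧ f =O[⊤] (fun y => japaneseBracket y ^ m) ∧
        IsSymbol N (m - 1) (deriv f) := by
  have order_shift (n : ℕ) : m - 1 - n = m - (n + 1 : ℕ) := by push_cast; ring
  constructor
  · rintro ⟨hsmooth, hbound⟩
    rw [Nat.cast_add_one, contDiff_succ_iff_deriv] at hsmooth
    refine ⟨hsmooth.1, by simpa using hbound 0 (Nat.zero_le _), hsmooth.2.2, fun n hn => ?_⟩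
    rw [← iteratedDeriv_succ', order_shift]
    exact hbound (n + 1) (Nat.succ_le_succ hn)
  · rintro ⟨hdiff, hzero, hderiv⟩
    refine ⟨?_, fun n hn => ?_⟩
    · rw [Nat.cast_add_one, contDiff_succ_iff_deriv]
      exact ⟨hdiff, by simp, hderiv.contDiff⟩
    · rcases n with _ | n
      · simpa using hzero
      · rw [iteratedDeriv_succ', ← order_shift]
        exact hderiv.iteratedDeriv_isBigO n (Nat.le_of_succ_le_succ hn)

namespace IsSymbol

lemma isBigO {f : ℝ → E} (hf : IsSymbol N m f) : f =O[⊤] fun y => japaneseBracket y ^ m := by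
  simpa using hf.iteratedDeriv_isBigO 0 (Nat.zero_le N)

lemma of_succ {f : ℝ → E} (hf : IsSymbol (N + 1) m f) : IsSymbol N m f :=
  ⟨hf.contDiff.of_le (by exact_mod_cast N.le_succ),
    fun n hn => hf.iteratedDeriv_isBigO n (hn.trans N.le_succ)⟩

lemma mono {f : ℝ → E} (hf : IsSymbol N m f) (hm : m ≤ m') : IsSymbol N m' f :=
  ⟨hf.contDiff, fun n hn => (hf.iteratedDeriv_isBigO n hn).trans
    (japaneseBracket_rpow_isBigO_of_le (sub_le_sub_right hm _))⟩

lemma add {f g : ℝ → E} (hf : IsSymbol N m f) (hg : IsSymbol N m g) :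
    IsSymbol N m (fun y => f y + g y) := by
  refine ⟨hf.contDiff.add hg.contDiff, fun n hn => ?_⟩
  have hn' : (n : WithTop ℕ∞) ≤ N := by exact_mod_cast hn
  refine ((hf.iteratedDeriv_isBigO n hn).add (hg.iteratedDeriv_isBigO n hn)).congr_left fun y => ?_
  exact (iteratedDeriv_fun_add (hf.contDiff.of_le hn').contDiffAt
    (hg.contDiff.of_le hn').contDiffAt).symm

protected lemma const (N : ℕ) (c : E) : IsSymbol N 0 fun _ => c := by
  refine ⟨contDiff_const, fun n _ => ?_⟩
  rcases n with _ | n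
  · simpa using isBigO_const_const c (one_ne_zero (α := ℝ)) (⊤ : Filter ℝ)
  · exact (isBigO_zero _ _).congr_left fun y => by simp [iteratedDeriv_const]

protected lemma id (N : ℕ) : IsSymbol N 1 fun y : ℝ => y := by
  have hbound : (fun y : ℝ => y) =O[⊤] fun y => japaneseBracket y ^ (1 : ℝ) :=
    isBigO_of_le _ fun y => by
      simpa [abs_of_pos (japaneseBracket_pos y)] using abs_le_japaneseBracket y
  cases N with
  | zero => exact isSymbol_zero_iff.2 ⟨continuous_id, hbound⟩
  | succ N =>
    refine isSymbol_succ_iff.2 ⟨differentiable_id, hbound, ?_⟩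
    simpa using IsSymbol.const N (1 : ℝ)

lemma isBigO_smul {f : ℝ → ℝ} {g : ℝ → E} (hf : IsSymbol N m f) (hg : IsSymbol N m' g) :
    (fun y => f y • g y) =O[⊤] fun y => japaneseBracket y ^ (m + m') :=
  (hf.isBigO.smul hg.isBigO).congr_right fun y => (Real.rpow_add (japaneseBracket_pos y) m m').symm

lemma smul {f : ℝ → ℝ} {g : ℝ → E} (hf : IsSymbol N m f) (hg : IsSymbol N m' g) :
    IsSymbol N (m + m') (fun y => f y • g y) := by
  induction N generalizing m m' f g with
  | zero =>
    exact isSymbol_zero_iff.2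
      ⟨hf.contDiff.continuous.smul hg.contDiff.continuous, hf.isBigO_smul hg⟩
  | succ N ih =>
    obtain ⟨hf_diff, -, hf_deriv⟩ := isSymbol_succ_iff.1 hf
    obtain ⟨hg_diff, -, hg_deriv⟩ := isSymbol_succ_iff.1 hg
    refine isSymbol_succ_iff.2 ⟨hf_diff.smul hg_diff, hf.isBigO_smul hg, ?_⟩
    have leibniz : deriv (fun y => f y • g y) = fun y => f y • deriv g y + deriv f y • g y :=
      funext fun y => deriv_fun_smul (hf_diff y) (hg_diff y)
    have hfg' := ih hf.of_succ hg_deriv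
    have hf'g := ih hf_deriv hg.of_succ
    rw [← add_sub_assoc] at hfg'
    rw [sub_add_eq_add_sub] at hf'g
    rw [leibniz]
    exact hfg'.add hf'g

lemma const_smul {f : ℝ → E} (hf : IsSymbol N m f) (c : ℝ) : IsSymbol N m fun y => c • f y := by
  simpa using (IsSymbol.const N c).smul hf

lemma sub {f g : ℝ → E} (hf : IsSymbol N m f) (hg : IsSymbol N m g) :
    IsSymbol N m (fun y => f y - g y) := by
  simpa [sub_eq_add_neg] using hf.add (hg.const_smul (-1))

lemma of_id_smul {f : ℝ → E} (hf : ContDiff ℝ N f)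
    (hyf : IsSymbol N (m + 1) fun y => y • f y) : IsSymbol N m f := by
  induction N generalizing m f with
  | zero =>
    exact isSymbol_zero_iff.2
      ⟨hf.continuous, isBigO_japaneseBracket_rpow_of_id_smul hf.continuous hyf.isBigO⟩
  | succ N ih =>
    obtain ⟨-, -, hyf_deriv⟩ := isSymbol_succ_iff.1 hyf
    have hf_succ : ContDiff ℝ (N + 1) f := mod_cast hf
    obtain ⟨hf_diff, -, hf'⟩ := contDiff_succ_iff_deriv.1 hf_succ
    refine isSymbol_succ_iff.2
      ⟨hf_diff, isBigO_japaneseBracket_rpow_of_id_smul hf_diff.continuous hyf.isBigO, ih hf' ?_⟩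
    have leibniz : (fun y => y • deriv f y) = fun y => deriv (fun y => y • f y) y - f y := by
      funext y
      rw [deriv_fun_smul differentiableAt_fun_id (hf_diff y)]
      simp
    have hf_symbol : IsSymbol N m f := ih (hf.of_le (by exact_mod_cast N.le_succ)) hyf.of_succ
    rw [leibniz, sub_add_cancel]
    rw [add_sub_cancel_right] at hyf_deriv
    exact hyf_deriv.sub hf_symbol

lemma rpow_const {f : ℝ → ℝ} (hf : IsSymbol N m f) (hpos : ∀ y, 0 < f y)
    (helliptic : (fun y => japaneseBracket y ^ m) =O[⊤] f) (s : ℝ) :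
    IsSymbol N (m * s) fun y => f y ^ s := by
  have hbound (s : ℝ) : (fun y => f y ^ s) =O[⊤] fun y => japaneseBracket y ^ (m * s) :=
    ((IsTheta.rpow (Eventually.of_forall fun y => (hpos y).le)
      (Eventually.of_forall fun y => (japaneseBracket_rpow_pos y m).le)
      ⟨hf.isBigO, helliptic⟩).isBigO).congr_right fun y =>
        (Real.rpow_mul (japaneseBracket_pos y).le m s).symm
  induction N generalizing s with
  | zero =>
    exact isSymbol_zero_iff.2
      ⟨hf.contDiff.continuous.rpow_const fun y => Or.inl (hpos y).ne', hbound s⟩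
  | succ N ih =>
    obtain ⟨hf_diff, -, hf_deriv⟩ := isSymbol_succ_iff.1 hf
    have hderiv (y : ℝ) : HasDerivAt (fun y => f y ^ s) (deriv f y * s * f y ^ (s - 1)) y :=
      (hf_diff y).hasDerivAt.rpow_const (Or.inl (hpos y).ne')
    refine isSymbol_succ_iff.2 ⟨fun y => (hderiv y).differentiableAt, hbound s, ?_⟩
    have hprod := (hf_deriv.smul (ih hf.of_succ (s - 1))).const_smul s
    rw [show m - 1 + m * (s - 1) = m * s - 1 by ring] at hprod
    convert hprod using 2 with y
    rw [(hderiv y).deriv, smul_eq_mul, smul_eq_mul]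
    ring

lemma sqrt {f : ℝ → ℝ} (hf : IsSymbol N m f) (hpos : ∀ y, 0 < f y)
    (helliptic : (fun y => japaneseBracket y ^ m) =O[⊤] f) :
    IsSymbol N (m / 2) fun y => √(f y) := by
  simpa only [Real.sqrt_eq_rpow, mul_one_div] using hf.rpow_const hpos helliptic (1 / 2)

lemma exists_norm_iteratedDeriv_comp_const_mul_le {f : ℝ → E} {n : ℕ} (hf : IsSymbol n m f) :
    ∃ C > 0, ∀ a y : ℝ, ‖iteratedDeriv n (fun x => f (a * x)) y‖ ≤
      C * |a| ^ n * japaneseBracket (a * y) ^ (m - n) := by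
  obtain ⟨C, hC, hbound⟩ := (hf.iteratedDeriv_isBigO n le_rfl).exists_pos
  refine ⟨C, hC, fun a y => ?_⟩
  have hay : ‖iteratedDeriv n f (a * y)‖ ≤ C * japaneseBracket (a * y) ^ (m - n) := by
    simpa [abs_of_pos (japaneseBracket_rpow_pos _ _)] using
      isBigOWith_top.1 hbound (a * y)
  rw [iteratedDeriv_comp_const_smul hf.contDiff, norm_smul, norm_pow, Real.norm_eq_abs,
    mul_comm C, mul_assoc]
  gcongr

end IsSymbol

end Symbol

section Tanh

lemma hasDerivAt_tanh (y : ℝ) : HasDerivAt Real.tanh (1 - Real.tanh y ^ 2) y := by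
  have hcosh := (Real.cosh_pos y).ne'
  rw [funext Real.tanh_eq_sinh_div_cosh]
  refine ((Real.hasDerivAt_sinh y).div (Real.hasDerivAt_cosh y) hcosh).congr_deriv ?_
  field_simp

lemma deriv_tanh : deriv Real.tanh = fun y => 1 - Real.tanh y ^ 2 :=
  funext fun y => (hasDerivAt_tanh y).deriv

lemma analyticAt_tanh (y : ℝ) : AnalyticAt ℝ Real.tanh y := by
  rw [funext Real.tanh_eq_sinh_div_cosh]
  exact Real.analyticAt_sinh.div Real.analyticAt_cosh (Real.cosh_pos y).ne'

lemma monotone_tanh : Monotone Real.tanh :=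
  monotone_of_hasDerivAt_nonneg hasDerivAt_tanh fun y => sub_nonneg.2 (Real.tanh_sq_lt_one y).le

lemma one_sub_tanh_sq (y : ℝ) : 1 - Real.tanh y ^ 2 = (Real.cosh y ^ 2)⁻¹ := by
  have hcosh := (Real.cosh_pos y).ne'
  rw [Real.tanh_eq_sinh_div_cosh]
  field_simp
  exact Real.cosh_sq_sub_sinh_sq y

lemma japaneseBracket_pow_le_cosh (n : ℕ) (y : ℝ) :
    japaneseBracket y ^ n ≤ n.factorial * Real.exp 1 * 2 * Real.cosh y := by
  calc japaneseBracket y ^ n ≤ (1 + |y|) ^ n :=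
        pow_le_pow_left₀ (japaneseBracket_pos y).le (japaneseBracket_le_one_add_abs y) n
    _ ≤ n.factorial * Real.exp (1 + |y|) :=
        (div_le_iff₀' (by positivity)).1 (Real.pow_div_factorial_le_exp _ (by positivity) n)
    _ = n.factorial * Real.exp 1 * Real.exp |y| := by rw [Real.exp_add, mul_assoc]
    _ ≤ n.factorial * Real.exp 1 * (2 * Real.cosh y) := by
        gcongr
        linarith [Real.exp_abs_le y, Real.cosh_eq y]
    _ = n.factorial * Real.exp 1 * 2 * Real.cosh y := by ring

lemma one_sub_tanh_sq_isBigO (m : ℝ) :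
    (fun y => 1 - Real.tanh y ^ 2) =O[⊤] fun y => japaneseBracket y ^ m := by
  obtain ⟨n, hn⟩ := exists_nat_ge (-m)
  have hpow : (fun y => 1 - Real.tanh y ^ 2) =O[⊤] fun y => japaneseBracket y ^ (-n : ℝ) := by
    refine isBigO_top.2 ⟨n.factorial * Real.exp 1 * 2, fun y => ?_⟩
    have hbracket := pow_pos (japaneseBracket_pos y) n
    have hcosh := Real.cosh_pos y
    rw [one_sub_tanh_sq, Real.norm_of_nonneg (by positivity),
      Real.norm_of_nonneg (japaneseBracket_rpow_pos y _).le,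
      Real.rpow_neg (japaneseBracket_pos y).le, Real.rpow_natCast]
    calc (Real.cosh y ^ 2)⁻¹ ≤ (Real.cosh y)⁻¹ := by
          gcongr
          exact le_self_pow₀ (Real.one_le_cosh y) two_ne_zero
      _ ≤ n.factorial * Real.exp 1 * 2 * (japaneseBracket y ^ n)⁻¹ := by
          rw [← div_eq_mul_inv, inv_le_comm₀ hcosh (by positivity), inv_div,
            div_le_iff₀' (by positivity)]
          exact japaneseBracket_pow_le_cosh n y
  exact hpow.trans (japaneseBracket_rpow_isBigO_of_le (by linarith))

lemma isSymbol_tanh_and_one_sub_tanh_sq (N : ℕ) :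
    IsSymbol N 0 Real.tanh ∧ ∀ m, IsSymbol N m fun y => 1 - Real.tanh y ^ 2 := by
  have htanh_bound : Real.tanh =O[⊤] fun y => japaneseBracket y ^ (0 : ℝ) :=
    isBigO_of_le _ fun y => by simpa using (Real.abs_tanh_lt_one y).le
  have htanh_diff : Differentiable ℝ Real.tanh := fun y => (hasDerivAt_tanh y).differentiableAt
  have hsech_diff : Differentiable ℝ fun y => 1 - Real.tanh y ^ 2 :=
    (htanh_diff.fun_pow 2).const_sub 1
  induction N with
  | zero =>
    exact ⟨isSymbol_zero_iff.2 ⟨htanh_diff.continuous, htanh_bound⟩, fun m =>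
      isSymbol_zero_iff.2 ⟨hsech_diff.continuous, one_sub_tanh_sq_isBigO m⟩⟩
  | succ N ih =>
    obtain ⟨htanh, hsech⟩ := ih
    refine ⟨isSymbol_succ_iff.2 ⟨htanh_diff, htanh_bound, deriv_tanh ▸ hsech _⟩, fun m =>
      isSymbol_succ_iff.2 ⟨hsech_diff, one_sub_tanh_sq_isBigO m, ?_⟩⟩
    have hderiv : deriv (fun y => 1 - Real.tanh y ^ 2) =
        fun y => (-2 : ℝ) • Real.tanh y • (1 - Real.tanh y ^ 2) := by
      funext y
      rw [(((hasDerivAt_tanh y).fun_pow 2).const_sub 1).deriv]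
      simp only [smul_eq_mul]
      ring
    have hprod := (htanh.smul (hsech (m - 1))).const_smul (-2)
    rw [zero_add] at hprod
    exact hderiv ▸ hprod

lemma isSymbol_tanh (N : ℕ) : IsSymbol N 0 Real.tanh :=
  (isSymbol_tanh_and_one_sub_tanh_sq N).1

end Tanh

section Tanhc

lemma contDiff_dslope_of_analyticAt {𝕜 E : Type*} [NontriviallyNormedField 𝕜]
    [NormedAddCommGroup E] [NormedSpace 𝕜 E] [CompleteSpace E] {f : 𝕜 → E}
    (hf : ∀ x, AnalyticAt 𝕜 f x) (a : 𝕜) {n : WithTop ℕ∞} : ContDiff 𝕜 n (dslope f a) := by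
  refine contDiff_iff_contDiffAt.2 fun x => AnalyticAt.contDiffAt ?_
  rcases eq_or_ne x a with rfl | hx
  · obtain ⟨p, hp⟩ := hf x
    exact ⟨_, hp.has_fpower_series_dslope_fslope⟩
  · have hslope : AnalyticAt 𝕜 (fun z => (z - a)⁻¹ • (f z - f a)) x :=
      ((analyticAt_id.sub analyticAt_const).inv (sub_ne_zero.2 hx)).smul
        ((hf x).sub analyticAt_const)
    exact hslope.congr (dslope_eventuallyEq_slope_of_ne f hx).symm

/-- The real-analytic extension of `tanh y / y` to the whole line, with value `1` at the origin: the
symbol `T_μ` is `ξ ↦ tanhc (√μ ξ)` away from `ξ = 0`, where the quotient has the junk value `0`. -/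
noncomputable def tanhc : ℝ → ℝ := dslope Real.tanh 0

lemma tanhc_of_ne_zero {y : ℝ} (hy : y ≠ 0) : tanhc y = Real.tanh y / y := by
  simp [tanhc, dslope_of_ne _ hy, slope_def_field]

lemma tanhc_zero : tanhc 0 = 1 := by
  simp [tanhc, deriv_tanh]

lemma tanhc_neg (y : ℝ) : tanhc (-y) = tanhc y := by
  rcases eq_or_ne y 0 with rfl | hy
  · rw [neg_zero]
  · rw [tanhc_of_ne_zero hy, tanhc_of_ne_zero (neg_ne_zero.2 hy), Real.tanh_neg, neg_div_neg_eq]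

lemma isSymbol_tanhc (N : ℕ) : IsSymbol N (-1) tanhc := by
  refine IsSymbol.of_id_smul (contDiff_dslope_of_analyticAt analyticAt_tanh 0) ?_
  have hmul (y : ℝ) : y • tanhc y = Real.tanh y := by
    simpa [tanhc] using sub_smul_dslope Real.tanh 0 y
  simpa only [hmul, neg_add_cancel] using isSymbol_tanh N

lemma div_japaneseBracket_le_tanh {y : ℝ} (hy : 0 ≤ y) : y / japaneseBracket y ≤ Real.tanh y := by
  have harsinh : Real.arsinh y ≤ y := by
    rw [← Real.sinh_le_sinh, Real.sinh_arsinh]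
    exact Real.self_le_sinh_iff.2 hy
  calc y / japaneseBracket y = Real.tanh (Real.arsinh y) := (Real.tanh_arsinh y).symm
    _ ≤ Real.tanh y := monotone_tanh harsinh

lemma inv_japaneseBracket_le_tanhc (y : ℝ) : (japaneseBracket y)⁻¹ ≤ tanhc y := by
  wlog hy : 0 ≤ y generalizing y
  · simpa [japaneseBracket, tanhc_neg] using this (-y) (by linarith)
  rcases hy.eq_or_lt with rfl | hy_pos
  · simp [japaneseBracket, tanhc_zero]
  · rw [tanhc_of_ne_zero hy_pos.ne', le_div_iff₀ hy_pos, inv_mul_eq_div]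
    exact div_japaneseBracket_le_tanh hy

lemma tanhc_pos (y : ℝ) : 0 < tanhc y :=
  (inv_pos.2 (japaneseBracket_pos y)).trans_le (inv_japaneseBracket_le_tanhc y)

lemma isSymbol_sqrt_tanhc (N : ℕ) : IsSymbol N (-1 / 2) fun y => √(tanhc y) := by
  refine (isSymbol_tanhc N).sqrt tanhc_pos (isBigO_of_le _ fun y => ?_)
  rw [Real.rpow_neg_one, norm_inv, Real.norm_of_nonneg (japaneseBracket_pos y).le,
    Real.norm_of_nonneg (tanhc_pos y).le]
  exact inv_japaneseBracket_le_tanhc y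

end Tanhc

section Kpos

lemma isSymbol_one_add_mul_sq (N : ℕ) (β : ℝ) : IsSymbol N 2 fun y => 1 + β * y ^ 2 := by
  have hsq := ((IsSymbol.id N).smul (IsSymbol.id N)).const_smul β
  rw [one_add_one_eq_two] at hsq
  simpa [pow_two] using ((IsSymbol.const N (1 : ℝ)).mono zero_le_two).add hsq

lemma isSymbol_sqrt_one_add_mul_sq (N : ℕ) {β : ℝ} (hβ : 0 ≤ β) :
    IsSymbol N 1 fun y => √(1 + β * y ^ 2) := by
  rcases hβ.eq_or_lt with rfl | hβ_pos
  · simpa using (IsSymbol.const N (1 : ℝ)).mono zero_le_one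
  · have hpos (y : ℝ) : 0 < 1 + β * y ^ 2 := by positivity
    have helliptic : (fun y => japaneseBracket y ^ (2 : ℝ)) =O[⊤] fun y => 1 + β * y ^ 2 := by
      refine isBigO_top.2 ⟨1 + β⁻¹, fun y => ?_⟩
      rw [Real.rpow_two, japaneseBracket_sq, Real.norm_of_nonneg (by positivity),
        Real.norm_of_nonneg (hpos y).le]
      calc 1 + y ^ 2 ≤ 1 + y ^ 2 + (β * y ^ 2 + β⁻¹) := le_add_of_nonneg_right (by positivity)
        _ = (1 + β⁻¹) * (1 + β * y ^ 2) := by field_simp; ring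
    simpa using (isSymbol_one_add_mul_sq N β).sqrt hpos helliptic

lemma isSymbol_sqrt_tanhc_mul_sqrt_one_add_mul_sq (N : ℕ) {β : ℝ} (hβ : 0 ≤ β) :
    IsSymbol N (1 / 2) fun y => √(tanhc y) * √(1 + β * y ^ 2) := by
  have hprod := (isSymbol_sqrt_tanhc N).smul (isSymbol_sqrt_one_add_mul_sq N hβ)
  rw [show (-1 / 2 + 1 : ℝ) = 1 / 2 by norm_num] at hprod
  exact hprod

lemma sqrt_Kpos_eq (β : ℝ) {μ ξ : ℝ} (hμ : 0 < μ) (hξ : ξ ≠ 0) :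
    √(Kpos β μ ξ) = √(tanhc (√μ * ξ)) * √(1 + β * (√μ * ξ) ^ 2) := by
  have hμξ : √μ * ξ ≠ 0 := mul_ne_zero (Real.sqrt_pos.2 hμ).ne' hξ
  rw [Kpos, Tpos, ← tanhc_of_ne_zero hμξ, Real.sqrt_mul (tanhc_pos _).le, mul_pow,
    Real.sq_sqrt hμ.le, mul_assoc β]

theorem iteratedDeriv_sqrt_Kpos_bound_general (n : ℕ) (β : ℝ) (hβ : 0 ≤ β) :
    ∃ C > 0, ∀ μ : ℝ, 0 < μ → ∀ ξ : ℝ, ξ ≠ 0 →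
      |iteratedDeriv n (fun x => √(Kpos β μ x)) ξ| ≤
        C * μ ^ ((n : ℝ) / 2) * (1 + μ * ξ ^ 2) ^ ((1 - 2 * (n : ℝ)) / 4) := by
  obtain ⟨C, hC, hbound⟩ :=
    (isSymbol_sqrt_tanhc_mul_sqrt_one_add_mul_sq n hβ).exists_norm_iteratedDeriv_comp_const_mul_le
  refine ⟨C, hC, fun μ hμ ξ hξ => ?_⟩
  have hrescale : (fun x => √(Kpos β μ x)) =ᶠ[nhds ξ]
      fun x => √(tanhc (√μ * x)) * √(1 + β * (√μ * x) ^ 2) := by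
    filter_upwards [isOpen_ne.mem_nhds hξ] with x hx using sqrt_Kpos_eq β hμ hx
  have hpow : |√μ| ^ n = μ ^ ((n : ℝ) / 2) := by
    rw [abs_of_nonneg (Real.sqrt_nonneg μ), ← Real.rpow_natCast, Real.sqrt_eq_rpow,
      ← Real.rpow_mul hμ.le, one_div_mul_eq_div]
  have hbracket : japaneseBracket (√μ * ξ) ^ (1 / 2 - n : ℝ) =
      (1 + μ * ξ ^ 2) ^ ((1 - 2 * (n : ℝ)) / 4) := by
    rw [japaneseBracket_rpow, mul_pow, Real.sq_sqrt hμ.le]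
    ring_nf
  rw [hrescale.iteratedDeriv_eq, ← hpow, ← hbracket]
  exact hbound (√μ) ξ

end Kpos

theorem iteratedDeriv_sqrt_Kpos_bound (n : ℕ) (β : ℝ) (hβ : 0 ≤ β) :
    ∃ C > 0, ∀ μ : ℝ, 0 < μ → ∀ ξ : ℝ, 0 < ξ →
      |iteratedDeriv n (fun x => Real.sqrt (Kpos β μ x)) ξ| ≤
        C * μ ^ ((n : ℝ)/2) * (1 + μ * ξ ^ 2) ^ ((1 - 2 * (n : ℝ))/4) := by
  obtain ⟨C, hC, hbound⟩ := iteratedDeriv_sqrt_Kpos_bound_general n β hβ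
  exact ⟨C, hC, fun μ hμ ξ hξ => hbound μ hμ ξ hξ.ne'⟩
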